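/- Stochastic stability: suppose each IFSm (X, τ, q^(n)) satisfies M1 (constant s), H2 (constant r), H3 (constant t) with s + r·t < 1, and q^(n)_x → q*_x in d_MK uniformly in x. Let μ^(n) be the unique invariant measure of the Markov operator T_{q^(n)}. Then (X, τ, q*) has a unique invariant measure μ*, and d_MK(μ^(n), μ*) → 0; moreover if d_MK(q^(n)_x, q*_x) < ε for all x then d_MK(μ^(n), μ*) ≤ r ε / (1 − (r t + s)). -/

import Mathlib

open MeasureTheory Filter

/-- The Monge–Kantorovich (Wasserstein-1) distance. -/
noncomputable def dMK {α : Type*} [MetricSpace α] [MeasurableSpace α]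
    (μ ν : Measure α) : ℝ :=
  ⨆ f : {f : α → ℝ // LipschitzWith 1 f}, (∫ z, f.1 z ∂μ - ∫ z, f.1 z ∂ν)

/-- The Markov operator of an IFSm. -/
noncomputable def markovOp {X Λ : Type*} [MeasurableSpace X] [MeasurableSpace Λ]
    (τ : Λ → X → X) (q : X → Measure Λ) : Measure X → Measure X :=
  fun μ => μ.bind fun x => (q x).map fun l => τ l x

/-!
Write `B_q` for the transfer operator and `C = r t + s`. M1, H2 and H3 say that `B_q` maps
1-Lipschitz functions to `C`-Lipschitz functions, a property closed under pointwise limits, hence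
inherited by `q*`; dually, `T_{q*}` contracts `d_MK` by the factor `C < 1`. By H2, moving each `q_x`
by at most `ε` moves `T_q μ` by at most `r ε`. So the `μ^(n)` are asymptotically invariant under
`T_{q*}`, any weak limit point of them is the invariant measure `μ*`, and
`d_MK(μ^(n), μ*) ≤ d_MK(T_{q^(n)} μ^(n), T_{q*} μ^(n)) + d_MK(T_{q*} μ^(n), T_{q*} μ*)`
`≤ r ε + C d_MK(μ^(n), μ*)`.
-/

open scoped NNReal Topology

theorem integrable_of_lipschitzWith {α : Type*} [PseudoMetricSpace α] [BoundedSpace α]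
    [MeasurableSpace α] [OpensMeasurableSpace α] {μ : Measure α} [IsFiniteMeasure μ] {f : α → ℝ}
    {K : ℝ≥0} (hf : LipschitzWith K f) : Integrable f μ := by
  obtain ⟨c, hc⟩ := (hf.isBounded_image (Bornology.IsBounded.all Set.univ)).exists_norm_le
  exact .of_bound hf.continuous.measurable.aestronglyMeasurable c
    (ae_of_all _ fun z => hc _ ⟨z, trivial, rfl⟩)

theorem integral_sub_integral_le_of_forall_sub_le {α : Type*} [MeasurableSpace α]
    {μ ν : Measure α} [IsProbabilityMeasure μ] [IsProbabilityMeasure ν] {f : α → ℝ} {D : ℝ}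
    (hμ : Integrable f μ) (hν : Integrable f ν) (hD : ∀ x y, f x - f y ≤ D) :
    ∫ z, f z ∂μ - ∫ z, f z ∂ν ≤ D := by
  obtain ⟨x, hx⟩ := exists_integral_le hμ
  obtain ⟨y, hy⟩ := exists_le_integral hν
  exact (sub_le_sub hx hy).trans (hD x y)

section MongeKantorovich

variable {α : Type*} [MetricSpace α] [MeasurableSpace α] {μ ν ρ : Measure α}

theorem dMK_le {c : ℝ} (h : ∀ f : α → ℝ, LipschitzWith 1 f → ∫ z, f z ∂μ - ∫ z, f z ∂ν ≤ c) :
    dMK μ ν ≤ c :=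
  have : Nonempty {f : α → ℝ // LipschitzWith 1 f} := ⟨⟨fun _ => 0, LipschitzWith.const' 0⟩⟩
  ciSup_le fun f => h f.1 f.2

variable [OpensMeasurableSpace α] [BoundedSpace α] [IsProbabilityMeasure μ]
  [IsProbabilityMeasure ν] [IsProbabilityMeasure ρ]

variable (μ ν) in
theorem bddAbove_range_integral_sub_integral :
    BddAbove (Set.range fun f : {f : α → ℝ // LipschitzWith 1 f} =>
      ∫ z, f.1 z ∂μ - ∫ z, f.1 z ∂ν) := by
  obtain ⟨D, hD⟩ := Metric.boundedSpace_iff.1 ‹BoundedSpace α›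
  refine ⟨D, ?_⟩
  rintro _ ⟨⟨f, hf⟩, rfl⟩
  refine integral_sub_integral_le_of_forall_sub_le (integrable_of_lipschitzWith hf)
    (integrable_of_lipschitzWith hf) fun x y => ?_
  have hxy : f x ≤ f y + dist x y := by simpa using hf.le_add_mul x y
  linarith [hD x y]

theorem integral_sub_integral_le_dMK {f : α → ℝ} (hf : LipschitzWith 1 f) :
    ∫ z, f z ∂μ - ∫ z, f z ∂ν ≤ dMK μ ν :=
  le_ciSup (bddAbove_range_integral_sub_integral μ ν) ⟨f, hf⟩

theorem integral_sub_integral_le_mul_dMK {f : α → ℝ} {K : ℝ≥0} (hf : LipschitzWith K f) :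
    ∫ z, f z ∂μ - ∫ z, f z ∂ν ≤ K * dMK μ ν := by
  rcases eq_or_ne K 0 with rfl | hK
  · rw [NNReal.coe_zero, zero_mul]
    exact integral_sub_integral_le_of_forall_sub_le (integrable_of_lipschitzWith hf)
      (integrable_of_lipschitzWith hf) fun x y => by simpa using hf.le_add_mul x y
  · have hK' : (0 : ℝ) < K := NNReal.coe_pos.2 (pos_iff_ne_zero.2 hK)
    have hg : LipschitzWith 1 fun z => (K : ℝ)⁻¹ * f z := by
      have h := (lipschitzWith_smul (β := ℝ) (K : ℝ)⁻¹).comp hf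
      rwa [nnnorm_inv, NNReal.nnnorm_eq, inv_mul_cancel₀ hK] at h
    have h := integral_sub_integral_le_dMK (μ := μ) (ν := ν) hg
    rwa [integral_const_mul, integral_const_mul, ← mul_sub, inv_mul_le_iff₀ hK'] at h

theorem dMK_nonneg : 0 ≤ dMK μ ν := by
  simpa using integral_sub_integral_le_dMK (μ := μ) (ν := ν) (LipschitzWith.const' 0)

theorem dMK_comm : dMK μ ν = dMK ν μ := by
  have h_le (μ ν : Measure α) [IsProbabilityMeasure μ] [IsProbabilityMeasure ν] :
      dMK μ ν ≤ dMK ν μ := dMK_le fun f hf => by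
    have h := integral_sub_integral_le_dMK (μ := ν) (ν := μ) hf.neg
    simp only [Pi.neg_apply, integral_neg] at h
    linarith
  exact (h_le μ ν).antisymm (h_le ν μ)

theorem dMK_triangle : dMK μ ρ ≤ dMK μ ν + dMK ν ρ :=
  dMK_le fun f hf => by
    linarith [integral_sub_integral_le_dMK (μ := μ) (ν := ν) hf,
      integral_sub_integral_le_dMK (μ := ν) (ν := ρ) hf]

end MongeKantorovich

theorem ext_of_forall_lipschitzWith_integral_eq {α : Type*} [PseudoEMetricSpace α]
    [MeasurableSpace α] [BorelSpace α] {μ ν : Measure α} [hμ : IsProbabilityMeasure μ]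
    [hν : IsProbabilityMeasure ν]
    (h : ∀ (f : α → ℝ) (K : ℝ≥0), LipschitzWith K f → ∫ z, f z ∂μ = ∫ z, f z ∂ν) : μ = ν := by
  let P : ProbabilityMeasure α := ⟨μ, hμ⟩
  let Q : ProbabilityMeasure α := ⟨ν, hν⟩
  have hPQ : Tendsto (fun _ : ℕ => P) atTop (𝓝 Q) :=
    tendsto_iff_forall_lipschitz_integral_tendsto.2 fun f _ ⟨K, hf⟩ =>
      tendsto_const_nhds.congr fun _ => (h f K hf).symm
  have hP_eq : P = Q := tendsto_nhds_unique tendsto_const_nhds hPQ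
  exact congrArg Subtype.val hP_eq

theorem eq_of_dMK_nonpos {α : Type*} [MetricSpace α] [MeasurableSpace α] [BorelSpace α]
    [BoundedSpace α] {μ ν : Measure α} [IsProbabilityMeasure μ] [IsProbabilityMeasure ν]
    (h : dMK μ ν ≤ 0) : μ = ν := by
  refine ext_of_forall_lipschitzWith_integral_eq fun f K hf => ?_
  have hμν := integral_sub_integral_le_mul_dMK (μ := μ) (ν := ν) hf
  have hνμ := integral_sub_integral_le_mul_dMK (μ := ν) (ν := μ) hf
  rw [dMK_comm] at hνμ
  have hK := mul_nonpos_of_nonneg_of_nonpos K.coe_nonneg h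
  exact le_antisymm (by linarith) (by linarith)

/-- The transfer operator `B_q` of the IFSm `(X, τ, q)`, of which `markovOp τ q` is the dual. -/
noncomputable def transferOp {X Λ : Type*} [MeasurableSpace Λ] (τ : Λ → X → X)
    (q : X → Measure Λ) (f : X → ℝ) (x : X) : ℝ :=
  ∫ l, f (τ l x) ∂q x

section MarkovOperator

variable {X Λ : Type*} [MeasurableSpace X] [MeasurableSpace Λ] {τ : Λ → X → X}
  {q : X → Measure Λ} {μ : Measure X} {f : X → ℝ}

theorem isProbabilityMeasure_markovOp [IsProbabilityMeasure μ] [∀ x, IsProbabilityMeasure (q x)]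
    (hτ : ∀ x, Measurable fun l => τ l x)
    (hq : Measurable fun x => (q x).map fun l => τ l x) :
    IsProbabilityMeasure (markovOp τ q μ) :=
  isProbabilityMeasure_bind hq.aemeasurable <| ae_of_all _ fun x =>
    Measure.isProbabilityMeasure_map (hτ x).aemeasurable

theorem integral_map_eq_transferOp {x : X} (hτ : Measurable fun l => τ l x)
    (hf : StronglyMeasurable f) :
    ∫ z, f z ∂((q x).map fun l => τ l x) = transferOp τ q f x :=
  integral_map hτ.aemeasurable hf.aestronglyMeasurable

open ProbabilityTheory in
theorem integrable_transferOp (hτ : ∀ x, Measurable fun l => τ l x)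
    (hq : Measurable fun x => (q x).map fun l => τ l x) (hf : StronglyMeasurable f)
    (hfi : Integrable f (markovOp τ q μ)) : Integrable (transferOp τ q f) μ := by
  let η : Kernel X X := ⟨_, hq⟩
  have h : Integrable f ((η ∘ₖ Kernel.const Unit μ) ()) := by
    rwa [Kernel.comp_apply]
  exact h.integral_comp.congr (ae_of_all _ fun x => integral_map_eq_transferOp (hτ x) hf)

open ProbabilityTheory in
theorem integral_markovOp (hτ : ∀ x, Measurable fun l => τ l x)
    (hq : Measurable fun x => (q x).map fun l => τ l x) (hf : StronglyMeasurable f)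
    (hfi : Integrable f (markovOp τ q μ)) :
    ∫ z, f z ∂markovOp τ q μ = ∫ x, transferOp τ q f x ∂μ := by
  let η : Kernel X X := ⟨_, hq⟩
  have h : Integrable f ((η ∘ₖ Kernel.const Unit μ) ()) := by
    rwa [Kernel.comp_apply]
  calc ∫ z, f z ∂markovOp τ q μ = ∫ z, f z ∂(η ∘ₖ Kernel.const Unit μ) () := by
        rw [Kernel.comp_apply]; rfl
    _ = ∫ x, ∫ z, f z ∂η x ∂μ := Kernel.integral_comp h
    _ = ∫ x, transferOp τ q f x ∂μ :=
        integral_congr_ae (ae_of_all _ fun x => integral_map_eq_transferOp (hτ x) hf)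

end MarkovOperator

section Contraction

variable {X Λ : Type*} [MetricSpace X] [MeasurableSpace Λ] {τ : Λ → X → X} {q : X → Measure Λ}
  {C : ℝ≥0}

/-- The transfer operator of `(X, τ, q)` multiplies Lipschitz constants by at most `C`. It is the
property of a place-dependent IFS that M1, H2 and H3 are designed to give. -/
def TransferLipschitzWith (C : ℝ≥0) (τ : Λ → X → X) (q : X → Measure Λ) : Prop :=
  ∀ f : X → ℝ, LipschitzWith 1 f → LipschitzWith C (transferOp τ q f)

variable [MeasurableSpace X] [BorelSpace X] {μ ν : Measure X} [IsProbabilityMeasure μ]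
  [IsProbabilityMeasure ν] [∀ x, IsProbabilityMeasure (q x)]

theorem integrable_transferOp_of_lipschitzWith [BoundedSpace X]
    (hτ : ∀ x, Measurable fun l => τ l x) (hq : Measurable fun x => (q x).map fun l => τ l x)
    {f : X → ℝ} {K : ℝ≥0} (hf : LipschitzWith K f) : Integrable (transferOp τ q f) μ :=
  have := isProbabilityMeasure_markovOp (μ := μ) hτ hq
  integrable_transferOp hτ hq hf.continuous.stronglyMeasurable (integrable_of_lipschitzWith hf)

theorem integral_markovOp_of_lipschitzWith [BoundedSpace X]
    (hτ : ∀ x, Measurable fun l => τ l x) (hq : Measurable fun x => (q x).map fun l => τ l x)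
    {f : X → ℝ} {K : ℝ≥0} (hf : LipschitzWith K f) :
    ∫ z, f z ∂markovOp τ q μ = ∫ x, transferOp τ q f x ∂μ :=
  have := isProbabilityMeasure_markovOp (μ := μ) hτ hq
  integral_markovOp hτ hq hf.continuous.stronglyMeasurable (integrable_of_lipschitzWith hf)

theorem dMK_markovOp_le_mul [BoundedSpace X] (hτ : ∀ x, Measurable fun l => τ l x)
    (hq : Measurable fun x => (q x).map fun l => τ l x) (hC : TransferLipschitzWith C τ q) :
    dMK (markovOp τ q μ) (markovOp τ q ν) ≤ C * dMK μ ν :=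
  dMK_le fun f hf => by
    rw [integral_markovOp_of_lipschitzWith hτ hq hf, integral_markovOp_of_lipschitzWith hτ hq hf]
    exact integral_sub_integral_le_mul_dMK (hC f hf)

theorem eq_of_markovOp_eq_self [BoundedSpace X] (hτ : ∀ x, Measurable fun l => τ l x)
    (hq : Measurable fun x => (q x).map fun l => τ l x) (hC : TransferLipschitzWith C τ q)
    (hC1 : C < 1) (hμ : markovOp τ q μ = μ) (hν : markovOp τ q ν = ν) : μ = ν := by
  have h := dMK_markovOp_le_mul (μ := μ) (ν := ν) hτ hq hC
  rw [hμ, hν] at h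
  exact eq_of_dMK_nonpos (by nlinarith [NNReal.coe_lt_one.2 hC1])

-- The Krylov–Bogoliubov argument: every weak limit point of `m` along `L` is invariant.
theorem exists_markovOp_eq_self_of_tendsto_dMK [CompactSpace X] {ι : Type*} {L : Filter ι}
    [L.NeBot] (hτ : ∀ x, Measurable fun l => τ l x)
    (hq : Measurable fun x => (q x).map fun l => τ l x)
    (hB : ∀ f : X → ℝ, LipschitzWith 1 f → Continuous (transferOp τ q f))
    {m : ι → Measure X} [hm : ∀ i, IsProbabilityMeasure (m i)]
    (hm_lim : Tendsto (fun i => dMK (m i) (markovOp τ q (m i))) L (𝓝 0)) :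
    ∃ μ : Measure X, IsProbabilityMeasure μ ∧ markovOp τ q μ = μ := by
  let P : ι → ProbabilityMeasure X := fun i => ⟨m i, hm i⟩
  obtain ⟨μ, -, hμ⟩ := (isCompact_univ (X := ProbabilityMeasure X)).ultrafilter_le_nhds
    ((Ultrafilter.of L).map P) (by simp)
  have hlim {f : X → ℝ} (hf : Continuous f) :
      Tendsto (fun i => ∫ x, f x ∂m i) (Ultrafilter.of L) (𝓝 (∫ x, f x ∂(μ : Measure X))) :=
    ProbabilityMeasure.tendsto_iff_forall_integral_tendsto.1 hμ
      (BoundedContinuousFunction.mkOfCompact ⟨f, hf⟩)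
  have hT (ν : Measure X) [IsProbabilityMeasure ν] : IsProbabilityMeasure (markovOp τ q ν) :=
    isProbabilityMeasure_markovOp hτ hq
  refine ⟨μ, inferInstance, (eq_of_dMK_nonpos (dMK_le fun f hf => ?_)).symm⟩
  rw [integral_markovOp_of_lipschitzWith hτ hq hf]
  refine le_of_tendsto_of_tendsto' ((hlim hf.continuous).sub (hlim (hB f hf)))
    (hm_lim.mono_left (Ultrafilter.of_le L)) fun i => ?_
  rw [← integral_markovOp_of_lipschitzWith hτ hq hf]
  exact integral_sub_integral_le_dMK hf

end Contraction

section Perturbation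

variable {X Λ : Type*} [MetricSpace X] [MetricSpace Λ] [MeasurableSpace Λ]
  [OpensMeasurableSpace Λ] {τ : Λ → X → X} {q q' : X → Measure Λ} {r C : ℝ≥0}
  [BoundedSpace Λ] [∀ x, IsProbabilityMeasure (q x)] [∀ x, IsProbabilityMeasure (q' x)]

theorem integral_comp_sub_integral_comp_le (hτ : ∀ x, LipschitzWith r fun l => τ l x)
    {p p' : Measure Λ} [IsProbabilityMeasure p] [IsProbabilityMeasure p'] {f : X → ℝ}
    (hf : LipschitzWith 1 f) (x : X) :
    ∫ l, f (τ l x) ∂p - ∫ l, f (τ l x) ∂p' ≤ r * dMK p p' := by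
  have h := hf.comp (hτ x)
  rw [one_mul] at h
  exact integral_sub_integral_le_mul_dMK h

theorem TransferLipschitzWith.of_integral_abs_sub_le {s t : ℝ≥0}
    (hM1 : ∀ f : X → ℝ, LipschitzWith 1 f → ∀ x y : X,
      ∫ l, |f (τ l x) - f (τ l y)| ∂q x ≤ s * dist x y)
    (hτ : ∀ x, LipschitzWith r fun l => τ l x)
    (hq : ∀ x y, dMK (q x) (q y) ≤ t * dist x y) :
    TransferLipschitzWith (r * t + s) τ q := by
  refine fun f hf => LipschitzWith.of_le_add_mul _ fun x y => ?_
  have hint (z : X) : Integrable (fun l => f (τ l z)) (q x) :=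
    integrable_of_lipschitzWith (hf.comp (hτ z))
  have hmove_point : ∫ l, f (τ l x) ∂q x - ∫ l, f (τ l y) ∂q x ≤ s * dist x y := by
    rw [← integral_sub (hint x) (hint y)]
    exact ((le_abs_self _).trans (abs_integral_le_integral_abs)).trans (hM1 f hf x y)
  have hmove_measure : ∫ l, f (τ l y) ∂q x - ∫ l, f (τ l y) ∂q y ≤ r * (t * dist x y) :=
    (integral_comp_sub_integral_comp_le hτ hf y).trans
      (mul_le_mul_of_nonneg_left (hq x y) r.2)
  push_cast
  simp only [transferOp]
  linarith

theorem tendsto_transferOp {ι : Type*} {L : Filter ι} {qs : ι → X → Measure Λ}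
    [∀ i x, IsProbabilityMeasure (qs i x)] (hτ : ∀ x, LipschitzWith r fun l => τ l x) {x : X}
    (hqs : Tendsto (fun i => dMK (qs i x) (q x)) L (𝓝 0)) {f : X → ℝ} (hf : LipschitzWith 1 f) :
    Tendsto (fun i => transferOp τ (qs i) f x) L (𝓝 (transferOp τ q f x)) := by
  rw [tendsto_iff_dist_tendsto_zero]
  refine squeeze_zero (fun _ => dist_nonneg) (fun i => ?_) (by simpa using hqs.const_mul (r : ℝ))
  have h := integral_comp_sub_integral_comp_le hτ (p := q x) (p' := qs i x) hf x
  rw [dMK_comm] at h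
  exact abs_sub_le_iff.2 ⟨integral_comp_sub_integral_comp_le hτ hf x, h⟩

theorem TransferLipschitzWith.of_tendsto_dMK {ι : Type*} {L : Filter ι} {qs : ι → X → Measure Λ}
    [∀ i x, IsProbabilityMeasure (qs i x)] (hτ : ∀ x, LipschitzWith r fun l => τ l x)
    (hC : ∃ᶠ i in L, TransferLipschitzWith C τ (qs i))
    (hqs : ∀ x, Tendsto (fun i => dMK (qs i x) (q x)) L (𝓝 0)) : TransferLipschitzWith C τ q :=
  fun f hf => (isClosed_setOfPred_lipschitzWith C).mem_of_frequently_of_tendsto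
    (hC.mono fun _ h => h f hf) (tendsto_pi_nhds.2 fun x => tendsto_transferOp hτ (hqs x) hf)

variable [MeasurableSpace X] [BorelSpace X] [BoundedSpace X] {μ ν : Measure X}
  [IsProbabilityMeasure μ] [IsProbabilityMeasure ν]

theorem dMK_markovOp_markovOp_le {ε : ℝ} (hτ : ∀ x, LipschitzWith r fun l => τ l x)
    (hq : Measurable fun x => (q x).map fun l => τ l x)
    (hq' : Measurable fun x => (q' x).map fun l => τ l x)
    (hε : ∀ x, dMK (q x) (q' x) ≤ ε) :
    dMK (markovOp τ q μ) (markovOp τ q' μ) ≤ r * ε := by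
  refine dMK_le fun f hf => ?_
  have hτm (x : X) : Measurable fun l => τ l x := (hτ x).continuous.measurable
  have hint := integrable_transferOp_of_lipschitzWith (μ := μ) hτm hq hf
  have hint' := integrable_transferOp_of_lipschitzWith (μ := μ) hτm hq' hf
  calc ∫ z, f z ∂markovOp τ q μ - ∫ z, f z ∂markovOp τ q' μ
      = ∫ x, (transferOp τ q f x - transferOp τ q' f x) ∂μ := by
        rw [integral_markovOp_of_lipschitzWith hτm hq hf,
          integral_markovOp_of_lipschitzWith hτm hq' hf, integral_sub hint hint']
    _ ≤ ∫ _, r * ε ∂μ := integral_mono (hint.sub hint') (integrable_const _) fun x =>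
        (integral_comp_sub_integral_comp_le hτ hf x).trans
          (mul_le_mul_of_nonneg_left (hε x) r.2)
    _ = r * ε := by simp

theorem dMK_le_of_markovOp_eq_self {ε : ℝ} (hτ : ∀ x, LipschitzWith r fun l => τ l x)
    (hq : Measurable fun x => (q x).map fun l => τ l x)
    (hq' : Measurable fun x => (q' x).map fun l => τ l x)
    (hC : TransferLipschitzWith C τ q') (hC1 : C < 1) (hμ : markovOp τ q μ = μ)
    (hν : markovOp τ q' ν = ν) (hε : ∀ x, dMK (q x) (q' x) ≤ ε) :
    dMK μ ν ≤ r * ε / (1 - C) := by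
  have hτm (x : X) : Measurable fun l => τ l x := (hτ x).continuous.measurable
  have := isProbabilityMeasure_markovOp (μ := μ) hτm hq'
  have h : dMK μ ν ≤ r * ε + C * dMK μ ν := calc
    dMK μ ν ≤ dMK μ (markovOp τ q' μ) + dMK (markovOp τ q' μ) ν := dMK_triangle
    _ = dMK (markovOp τ q μ) (markovOp τ q' μ) + dMK (markovOp τ q' μ) (markovOp τ q' ν) := by
      rw [hμ, hν]
    _ ≤ r * ε + C * dMK μ ν :=
      add_le_add (dMK_markovOp_markovOp_le hτ hq hq' hε) (dMK_markovOp_le_mul hτm hq' hC)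
  rw [le_div_iff₀ (sub_pos.2 (by exact_mod_cast hC1))]
  linarith

end Perturbation

theorem tendsto_zero_of_forall_le_mul {ι X : Type*} {L : Filter ι} {d : ι → X → ℝ} {g : ι → ℝ}
    {K : ℝ} (hd : ∀ ε > 0, ∀ᶠ i in L, ∀ x, d i x < ε) (hg : ∀ i, 0 ≤ g i)
    (hgd : ∀ i ε, (∀ x, d i x ≤ ε) → g i ≤ K * ε) : Tendsto g L (𝓝 0) := by
  refine tendsto_order.2 ⟨fun a ha => .of_forall fun i => ha.trans_le (hg i), fun δ hδ => ?_⟩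
  obtain ⟨ε, hε, hKε⟩ := exists_pos_mul_lt hδ K
  exact (hd ε hε).mono fun i hi => (hgd i ε fun x => (hi x).le).trans_lt hKε

theorem stochastic_stability_general {X Λ ι : Type*} {L : Filter ι} [MetricSpace X]
    [CompactSpace X] [MeasurableSpace X] [BorelSpace X] [MetricSpace Λ] [BoundedSpace Λ]
    [MeasurableSpace Λ] [OpensMeasurableSpace Λ] {τ : Λ → X → X} {r C : ℝ≥0}
    (hτ : ∀ x, LipschitzWith r fun l => τ l x) {qs : ι → X → Measure Λ} {q : X → Measure Λ}
    [∀ i x, IsProbabilityMeasure (qs i x)] [∀ x, IsProbabilityMeasure (q x)]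
    (hqs : ∀ i, Measurable fun x => (qs i x).map fun l => τ l x)
    (hq : Measurable fun x => (q x).map fun l => τ l x)
    (hC : ∃ᶠ i in L, TransferLipschitzWith C τ (qs i)) (hC1 : C < 1)
    (hconv : ∀ ε > 0, ∀ᶠ i in L, ∀ x, dMK (qs i x) (q x) < ε)
    {m : ι → Measure X} [∀ i, IsProbabilityMeasure (m i)]
    (hm : ∀ i, markovOp τ (qs i) (m i) = m i) :
    ∃ μ : Measure X, IsProbabilityMeasure μ ∧ markovOp τ q μ = μ ∧
      (∀ ν : Measure X, IsProbabilityMeasure ν → markovOp τ q ν = ν → ν = μ) ∧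
      Tendsto (fun i => dMK (m i) μ) L (𝓝 0) ∧
      ∀ i ε, (∀ x, dMK (qs i x) (q x) ≤ ε) → dMK (m i) μ ≤ r * ε / (1 - C) := by
  have : L.NeBot := ⟨fun h => by simp [h] at hC⟩
  have hτm (x : X) : Measurable fun l => τ l x := (hτ x).continuous.measurable
  have (i : ι) : IsProbabilityMeasure (markovOp τ q (m i)) := isProbabilityMeasure_markovOp hτm hq
  have hCq : TransferLipschitzWith C τ q := .of_tendsto_dMK hτ hC fun x =>
    tendsto_zero_of_forall_le_mul (K := 1) hconv (fun _ => dMK_nonneg) fun _ _ h => by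
      simpa using h x
  obtain ⟨μ, hμ_prob, hμ⟩ := exists_markovOp_eq_self_of_tendsto_dMK hτm hq
    (fun f hf => (hCq f hf).continuous) (m := m) <|
    tendsto_zero_of_forall_le_mul (K := r) hconv (fun _ => dMK_nonneg) fun i ε h => by
      simpa only [hm i] using dMK_markovOp_markovOp_le (μ := m i) hτ (hqs i) hq h
  have hbound (i : ι) (ε : ℝ) (h : ∀ x, dMK (qs i x) (q x) ≤ ε) : dMK (m i) μ ≤ r * ε / (1 - C) :=
    dMK_le_of_markovOp_eq_self hτ (hqs i) hq hCq hC1 (hm i) hμ h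
  refine ⟨μ, hμ_prob, hμ, fun ν _ hν => eq_of_markovOp_eq_self hτm hq hCq hC1 hν hμ, ?_, hbound⟩
  exact tendsto_zero_of_forall_le_mul hconv (fun _ => dMK_nonneg) fun i ε h =>
    (hbound i ε h).trans_eq (div_mul_eq_mul_div (r : ℝ) _ ε).symm

/-- Stochastic stability: if each IFSm `(X, τ, q^(n))` satisfies M1, H2, H3 with constants
`s`, `r`, `t` such that `s + r·t < 1`, `q^(n)_x → q*_x` in `d_MK` uniformly in `x`, and
`μ^(n)` is the invariant measure of `T_{q^(n)}`, then `(X, τ, q*)` has a unique invariant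
probability measure `μ*`, `d_MK(μ^(n), μ*) → 0`, and if `d_MK(q^(n)_x, q*_x) < ε` for all
`x` then `d_MK(μ^(n), μ*) ≤ r·ε / (1 − (r·t + s))`. -/
theorem stochastic_stability
    {X Λ : Type*} [MetricSpace X] [CompactSpace X] [MeasurableSpace X] [BorelSpace X]
    [MetricSpace Λ] [CompactSpace Λ] [MeasurableSpace Λ] [BorelSpace Λ]
    (τ : Λ → X → X) (hτ : Continuous fun p : Λ × X => τ p.1 p.2)
    (qn : ℕ → X → Measure Λ) (hqn_prob : ∀ n x, IsProbabilityMeasure (qn n x))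
    (hqn_meas : ∀ n, Measurable fun x => (qn n x).map fun l => τ l x)
    (qstar : X → Measure Λ) (hqstar_prob : ∀ x, IsProbabilityMeasure (qstar x))
    (hqstar_meas : Measurable fun x => (qstar x).map fun l => τ l x)
    (s r t : ℝ) (hs : 0 < s) (hr : 0 ≤ r) (ht : 0 ≤ t) (hcontr : s + r * t < 1)
    (hM1 : ∀ (n : ℕ) (f : X → ℝ), LipschitzWith 1 f → ∀ x y : X,
      ∫ l, |f (τ l x) - f (τ l y)| ∂(qn n x) ≤ s * dist x y)
    (hH2 : ∀ (x : X) (l₁ l₂ : Λ), dist (τ l₁ x) (τ l₂ x) ≤ r * dist l₁ l₂)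
    (hH3 : ∀ (n : ℕ) (x y : X), dMK (qn n x) (qn n y) ≤ t * dist x y)
    (hconv : ∀ ε : ℝ, 0 < ε → ∃ N : ℕ, ∀ n ≥ N, ∀ x : X, dMK (qn n x) (qstar x) < ε)
    (μn : ℕ → Measure X) (hμn_prob : ∀ n, IsProbabilityMeasure (μn n))
    (hμn_inv : ∀ n, markovOp τ (qn n) (μn n) = μn n) :
    ∃ μstar : Measure X, IsProbabilityMeasure μstar ∧
      markovOp τ qstar μstar = μstar ∧
      (∀ ν : Measure X, IsProbabilityMeasure ν → markovOp τ qstar ν = ν → ν = μstar) ∧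
      Tendsto (fun n => dMK (μn n) μstar) atTop (nhds 0) ∧
      ∀ (n : ℕ) (ε : ℝ), 0 < ε → (∀ x : X, dMK (qn n x) (qstar x) < ε) →
        dMK (μn n) μstar ≤ r * ε / (1 - (r * t + s)) := by
  lift s to ℝ≥0 using hs.le
  lift r to ℝ≥0 using hr
  lift t to ℝ≥0 using ht
  have hτ_lip (x : X) : LipschitzWith r fun l => τ l x := .of_dist_le_mul (hH2 x)
  obtain ⟨μstar, hprob, hinv, huniq, hlim, hbound⟩ := stochastic_stability_general hτ_lip hqn_meas
    hqstar_meas (Frequently.of_forall fun n => .of_integral_abs_sub_le (hM1 n) hτ_lip (hH3 n))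
    (by rwa [add_comm] : r * t + s < 1) (fun ε hε => eventually_atTop.2 (hconv ε hε)) hμn_inv
  exact ⟨μstar, hprob, hinv, huniq, hlim, fun n ε _ h => hbound n ε fun x => (h x).le⟩
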